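/- For any k ≥ 3 and any H ≤ D, ∑_{1 ≤ d_1 < d_2 < ... < d_{k-2} < H} S({0, d_1, ..., d_{k-2}, D}) = S({0, D}) · H^{k-2}/(k-2)! · (1 + O_k(D^ε/H^{1/2})). -/

import Mathlib

open Finset

/-- Number of residue classes mod `p` occupied by the elements of `D`. -/
def nu (D : Finset ℕ) (p : ℕ) : ℕ := (D.image (· % p)).card

/-- The Hardy–Littlewood singular series of a finite set `D`. -/
noncomputable def singSeries (D : Finset ℕ) : ℝ :=
  ∏' p : Nat.Primes, ((1 - 1 / ((p : ℕ) : ℝ)) ^ D.card)⁻¹ * (1 - (nu D (p : ℕ) : ℝ) / ((p : ℕ) : ℝ))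

/-- `primePi x D` counts positive integers `m ≤ x` with `m + d` prime for all `d ∈ D`. -/
noncomputable def primePi (x : ℝ) (D : Finset ℕ) : ℕ :=
  {m : ℕ | 0 < m ∧ (m : ℝ) ≤ x ∧ ∀ d ∈ D, Nat.Prime (m + d)}.ncard

/-- `Ncham x D` counts `n` such that `p_{n+k} ≤ x` and the gaps `p_{n+i} - p_n` for
`i = 1, …, k` are exactly the elements of `D` (with `k = D.card`). -/
noncomputable def Ncham (x : ℝ) (D : Finset ℕ) : ℕ :=
  {n : ℕ | ((Nat.nth Nat.Prime (n + D.card) : ℝ) ≤ x) ∧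
    (Finset.range D.card).image
      (fun i => Nat.nth Nat.Prime (n + i + 1) - Nat.nth Nat.Prime n) = D}.ncard

/-- `D` is a `k`-tuple jumping champion for `x`. -/
def IsChampion (k : ℕ) (x : ℝ) (D : Finset ℕ) : Prop :=
  D.card = k ∧ (∀ d ∈ D, 0 < d) ∧
    ∀ D' : Finset ℕ, D'.card = k → (∀ d ∈ D', 0 < d) → Ncham x D' ≤ Ncham x D

/-- Number of prime factors counted with multiplicity. -/
def bigOmega (n : ℕ) : ℕ := n.primeFactorsList.length

/-- The `n`-th primorial `2·3·5⋯p_n`. -/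
noncomputable def primorial' (n : ℕ) : ℕ := ∏ i ∈ Finset.range n, Nat.nth Nat.Prime i

/-- The largest primorial not exceeding `y` (equal to `1` if `y < 1`). -/
noncomputable def largestPrimorial (y : ℝ) : ℕ :=
  primorial' (sSup {n : ℕ | (primorial' n : ℝ) ≤ y})

/-!
Inserting `d ∉ A` into `A` multiplies the factor of `singSeries A` at `p` by `1 + g_p(d)`, where
`g_p` is `p`-periodic and, if the factor at `p` is nonzero, has mean zero over a period. So
`∑_d singSeries (A ∪ {d}) / singSeries A` is the limit over finite sets `P` of primes of
`∑_d ∏_{p ∈ P} (1 + g_p(d))`. Expand the product over subsets `t ⊆ P`: the empty set gives the main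
term `H`. For nonempty `t` the complete periods modulo `∏_{p ∈ t} p` cancel by the Chinese remainder
theorem, leaving at most `∏_{p ∈ t} O(1 / p)`. Weighing this bound by `√H / ∏_{p ∈ t} √p` against
the trivial bound `∑_d ∏_{p ∈ t} |g_p(d)|` by the inverse weight gives the error `O(h ^ ε * √H)`.
Here the primes with `d` congruent to some `a ∈ A`, for which `g_p(d)` is only `O(1 / p)` instead of
`O(1 / p ^ 2)`, divide the nonzero number `∏_{a ∈ A} |d - a|` and so cost only a factor
`3 ^ ω(∏_{a ∈ A} |d - a|) = O(h ^ ε)`.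

For `j` new elements, insert them one at a time: each `(j + 1)`-element set arises from `j + 1`
pairs of a `j`-element set and a further element.
-/

/-- The set of residue classes mod `p` occupied by `A`, so that `nu A p = #(residues A p)`. -/
abbrev residues (A : Finset ℕ) (p : ℕ) : Finset ℕ := A.image (· % p)

/-- The factor at `p` of the Euler product `singSeries A`. -/
noncomputable def localFactor (A : Finset ℕ) (p : ℕ) : ℝ :=
  ((1 - 1 / (p : ℝ)) ^ #A)⁻¹ * (1 - (nu A p : ℝ) / p)

/-- The relative change of `localFactor A p` when `d` is inserted into `A`: for `nu A p < p` it is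
`(1 - 1 / p)⁻¹ * (1 - nu (insert d A) p / p) / (1 - nu A p / p) - 1`, written as a function of
whether the class of `d` mod `p` is already occupied. -/
noncomputable def localDeviation (A : Finset ℕ) (p d : ℕ) : ℝ :=
  if d % p ∈ residues A p then ((p : ℝ) - 1)⁻¹
  else -(nu A p / (((p : ℝ) - 1) * (p - nu A p)))

/-- The sum of the singular series over all extensions of the base set `A` by `j` integers
`0 ≤ d < H` outside `A`; the increasing `j`-tuples are encoded as `j`-element sets. -/
noncomputable def singSeriesSum (A : Finset ℕ) (H j : ℕ) : ℝ :=
  ∑ s ∈ (range H \ A).powersetCard j, singSeries (A ∪ s)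

/-! ### Sums of periodic functions -/

theorem sum_range_mul_of_periodic {R : Type*} [CommSemiring R] {m n : ℕ} (hm : 0 < m) (hn : 0 < n)
    (hmn : m.Coprime n) {F G : ℕ → R} (hF : Function.Periodic F m) (hG : Function.Periodic G n) :
    ∑ x ∈ range (m * n), F x * G x = (∑ x ∈ range m, F x) * ∑ x ∈ range n, G x := by
  rw [sum_mul_sum, ← sum_product']
  refine sum_nbij (fun x ↦ (x % m, x % n)) (fun x _ ↦ ?_) (fun x hx y hy hxy ↦ ?_) ?_ fun x _ ↦ ?_
  · simp [Nat.mod_lt, hm, hn]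
  · simp only [coe_range, Set.mem_Iio, Prod.mk.injEq] at hx hy hxy
    exact ((Nat.modEq_and_modEq_iff_modEq_mul hmn).1 hxy).eq_of_lt_of_lt hx hy
  · rintro ⟨a, b⟩ hab
    simp only [coe_product, coe_range, Set.mem_prod, Set.mem_Iio] at hab
    have hmod := (Nat.chineseRemainder hmn a b).2
    refine ⟨Nat.chineseRemainder hmn a b, ?_, Prod.ext ?_ ?_⟩
    · simpa using Nat.chineseRemainder_lt_mul hmn a b hm.ne' hn.ne'
    · exact Eq.trans hmod.1 (Nat.mod_eq_of_lt hab.1)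
    · exact Eq.trans hmod.2 (Nat.mod_eq_of_lt hab.2)
  · rw [hF.map_mod_nat, hG.map_mod_nat]

theorem periodic_prod_of_periodic {ι R : Type*} [CommMonoid R] {t : Finset ι} {q : ι → ℕ}
    {F : ι → ℕ → R} (hF : ∀ i ∈ t, Function.Periodic (F i) (q i)) :
    Function.Periodic (fun x ↦ ∏ i ∈ t, F i x) (∏ i ∈ t, q i) := by
  refine fun x ↦ prod_congr rfl fun i hi ↦ ?_
  obtain ⟨m, hm⟩ := dvd_prod_of_mem q hi
  rw [hm, mul_comm]
  exact (hF i hi).nat_mul m x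

theorem sum_range_prod_of_periodic {ι R : Type*} [CommSemiring R] {t : Finset ι} {q : ι → ℕ}
    (hq : ∀ i ∈ t, 0 < q i) (hqt : (t : Set ι).Pairwise (Function.onFun Nat.Coprime q))
    {F : ι → ℕ → R} (hF : ∀ i ∈ t, Function.Periodic (F i) (q i)) :
    ∑ x ∈ range (∏ i ∈ t, q i), ∏ i ∈ t, F i x = ∏ i ∈ t, ∑ x ∈ range (q i), F i x := by
  classical
  induction t using Finset.induction_on with
  | empty => simp
  | insert i t hi ih =>
    simp only [forall_mem_insert] at hq hF
    have hcop : (q i).Coprime (∏ j ∈ t, q j) := Nat.Coprime.prod_right fun j hj ↦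
      hqt (mem_insert_self i t) (mem_insert_of_mem hj) (ne_of_mem_of_not_mem hj hi).symm
    simp only [prod_insert hi]
    rw [sum_range_mul_of_periodic hq.1 (prod_pos hq.2) hcop hF.1 (periodic_prod_of_periodic hF.2),
      ih hq.2 (hqt.mono (coe_subset.2 (subset_insert i t))) hF.2]

theorem abs_sum_range_le_of_periodic {R : Type*} [AddCommGroup R] [LinearOrder R]
    [IsOrderedAddMonoid R] {q : ℕ} (hq : 0 < q) {F : ℕ → R} (hF : Function.Periodic F q)
    (h0 : ∑ x ∈ range q, F x = 0) (H : ℕ) :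
    |∑ x ∈ range H, F x| ≤ ∑ x ∈ range q, |F x| := by
  have drop_periods (m r : ℕ) : ∑ x ∈ range (q * m + r), F x = ∑ x ∈ range r, F x := by
    induction m with
    | zero => simp
    | succ m ih =>
      rw [show q * (m + 1) + r = q + (q * m + r) by ring, sum_range_add, h0, zero_add, ← ih]
      exact sum_congr rfl fun x _ ↦ by rw [add_comm, hF]
  rw [← Nat.div_add_mod H q, drop_periods]
  exact (abs_sum_le_sum_abs _ _).trans <| sum_le_sum_of_subset_of_nonneg
    (range_subset_range.2 (Nat.mod_lt _ hq).le) fun _ _ _ ↦ abs_nonneg _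

/-! ### The local factors -/

section Local

variable {A : Finset ℕ} {p d : ℕ}

theorem nu_le_card (A : Finset ℕ) (p : ℕ) : nu A p ≤ #A := card_image_le

theorem nu_le (A : Finset ℕ) (hp : 0 < p) : nu A p ≤ p := by
  have hsub : residues A p ⊆ range p :=
    image_subset_iff.2 fun a _ ↦ mem_range.2 (Nat.mod_lt a hp)
  simpa [nu] using card_le_card hsub

theorem nu_insert_of_mem (hd : d % p ∈ residues A p) : nu (insert d A) p = nu A p := by
  rw [nu, image_insert, insert_eq_of_mem hd, nu]

theorem nu_insert_of_notMem (hd : d % p ∉ residues A p) : nu (insert d A) p = nu A p + 1 := by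
  rw [nu, image_insert, card_insert_of_notMem hd, nu]

theorem nu_lt_of_notMem (hp : 0 < p) (hd : d % p ∉ residues A p) : nu A p < p :=
  Nat.lt_of_succ_le <| (nu_insert_of_notMem hd).symm.trans_le (nu_le _ hp)

theorem localFactor_nonneg (A : Finset ℕ) (hp : 0 < p) : 0 ≤ localFactor A p := by
  have hp_inv : 1 / (p : ℝ) ≤ 1 := div_le_one_of_le₀ (by exact_mod_cast hp) p.cast_nonneg
  have hν_div : (nu A p : ℝ) / p ≤ 1 :=
    div_le_one_of_le₀ (by exact_mod_cast nu_le A hp) p.cast_nonneg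
  exact mul_nonneg (inv_nonneg.2 (pow_nonneg (sub_nonneg.2 hp_inv) _)) (sub_nonneg.2 hν_div)

theorem localFactor_eq_zero (hp : 0 < p) (hν : nu A p = p) : localFactor A p = 0 := by
  rw [localFactor, hν, div_self (by positivity), sub_self, mul_zero]

theorem localFactor_insert (hp : 1 < p) (hd : d ∉ A) :
    localFactor (insert d A) p = localFactor A p * (1 + localDeviation A p d) := by
  have hp0 : (p : ℝ) ≠ 0 := by positivity
  have hp1 : (p : ℝ) - 1 ≠ 0 := sub_ne_zero.2 (by exact_mod_cast hp.ne')
  have hfactor : 1 - 1 / (p : ℝ) = (p - 1) / p := by field_simp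
  rw [localFactor, localFactor, localDeviation, card_insert_of_notMem hd, pow_succ, mul_inv,
    mul_assoc, mul_assoc, hfactor]
  congr 1
  split_ifs with hdA
  · rw [nu_insert_of_mem hdA]
    field_simp
    ring
  · have hν : (p : ℝ) - nu A p ≠ 0 :=
      sub_ne_zero.2 (by exact_mod_cast (nu_lt_of_notMem (by lia) hdA).ne')
    rw [nu_insert_of_notMem hdA]
    push_cast
    field_simp
    ring

theorem periodic_localDeviation (A : Finset ℕ) (p : ℕ) :
    Function.Periodic (localDeviation A p) p := fun d ↦ by
  simp only [localDeviation, Nat.add_mod_right]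

theorem card_filter_mod_mem_residues (A : Finset ℕ) (hp : 0 < p) :
    #{d ∈ range p | d % p ∈ residues A p} = nu A p := by
  congr 1
  ext x
  refine ⟨fun hx ↦ ?_, fun hx ↦ ?_⟩
  · obtain ⟨hxp, hxA⟩ := mem_filter.1 hx
    rwa [Nat.mod_eq_of_lt (mem_range.1 hxp)] at hxA
  · have hxp : x < p := by
      obtain ⟨a, -, rfl⟩ := mem_image.1 hx
      exact Nat.mod_lt a hp
    exact mem_filter.2 ⟨mem_range.2 hxp, by rwa [Nat.mod_eq_of_lt hxp]⟩

theorem sum_range_ite_mod_mem_residues (A : Finset ℕ) (hp : 0 < p) (u v : ℝ) :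
    ∑ d ∈ range p, (if d % p ∈ residues A p then u else v) = nu A p * u + (p - nu A p) * v := by
  have hsplit := card_filter_add_card_filter_not (s := range p) (· % p ∈ residues A p)
  rw [card_filter_mod_mem_residues A hp, card_range] at hsplit
  have hcompl : (#{d ∈ range p | d % p ∉ residues A p} : ℝ) = p - nu A p :=
    eq_sub_of_add_eq' (by exact_mod_cast hsplit)
  rw [sum_ite, sum_const, sum_const, nsmul_eq_mul, nsmul_eq_mul,
    card_filter_mod_mem_residues A hp, hcompl]

theorem abs_localDeviation (A : Finset ℕ) (hp : 1 < p) (d : ℕ) :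
    |localDeviation A p d| = if d % p ∈ residues A p then ((p : ℝ) - 1)⁻¹
      else nu A p / (((p : ℝ) - 1) * (p - nu A p)) := by
  have hp1 : 0 ≤ (p : ℝ) - 1 := sub_nonneg.2 (by exact_mod_cast hp.le)
  have hν : 0 ≤ (p : ℝ) - nu A p := sub_nonneg.2 (by exact_mod_cast nu_le A (by lia))
  rw [localDeviation]
  split_ifs
  · exact abs_of_nonneg (by positivity)
  · rw [abs_neg, abs_of_nonneg (by positivity)]

theorem sum_localDeviation (hp : 1 < p) (hν : nu A p < p) :
    ∑ d ∈ range p, localDeviation A p d = 0 := by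
  have hp1 : (p : ℝ) - 1 ≠ 0 := sub_ne_zero.2 (by exact_mod_cast hp.ne')
  have hν' : (p : ℝ) - nu A p ≠ 0 := sub_ne_zero.2 (by exact_mod_cast hν.ne')
  simp only [localDeviation]
  rw [sum_range_ite_mod_mem_residues A (by lia)]
  field_simp
  ring

theorem inv_natCast_sub_one_le (hp : 1 < p) : ((p : ℝ) - 1)⁻¹ ≤ 2 / p := by
  have hp' : (2 : ℝ) ≤ p := by exact_mod_cast hp
  rw [inv_eq_one_div, div_le_div_iff₀ (by linarith) (by linarith)]
  linarith

theorem sum_abs_localDeviation_le (hp : 1 < p) (hν : nu A p < p) :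
    ∑ d ∈ range p, |localDeviation A p d| ≤ 4 * #A / p := by
  have hp1 : (p : ℝ) - 1 ≠ 0 := sub_ne_zero.2 (by exact_mod_cast hp.ne')
  have hν' : (p : ℝ) - nu A p ≠ 0 := sub_ne_zero.2 (by exact_mod_cast hν.ne')
  simp only [abs_localDeviation A hp]
  rw [sum_range_ite_mod_mem_residues A (by lia)]
  calc (nu A p : ℝ) * ((p : ℝ) - 1)⁻¹ + (p - nu A p) * (nu A p / ((p - 1) * (p - nu A p)))
      = 2 * nu A p * ((p : ℝ) - 1)⁻¹ := by field_simp; ring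
    _ ≤ 2 * #A * (2 / p) := by
        gcongr
        · exact inv_nonneg.2 (sub_nonneg.2 (by exact_mod_cast hp.le))
        · exact nu_le_card A p
        · exact inv_natCast_sub_one_le hp
    _ = 4 * #A / p := by ring

theorem abs_localDeviation_le_of_mem (hp : 1 < p) (hd : d % p ∈ residues A p) :
    |localDeviation A p d| ≤ 2 / p := by
  rw [abs_localDeviation A hp, if_pos hd]
  exact inv_natCast_sub_one_le hp

theorem abs_localDeviation_le_of_notMem (hp : 1 < p) (hd : d % p ∉ residues A p) :
    |localDeviation A p d| ≤ 2 * #A * (#A + 1) / p ^ 2 := by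
  have hp' : (2 : ℝ) ≤ p := by exact_mod_cast hp
  have hν : (nu A p : ℝ) + 1 ≤ p := by exact_mod_cast nu_lt_of_notMem (by lia) hd
  have hνA : (nu A p : ℝ) ≤ #A := by exact_mod_cast nu_le_card A p
  have hinv : ((p : ℝ) - nu A p)⁻¹ ≤ (#A + 1) / p := by
    rw [inv_eq_one_div, div_le_div_iff₀ (by linarith) (by linarith)]
    nlinarith [mul_nonneg (sub_nonneg.2 hνA) (sub_nonneg.2 hν)]
  rw [abs_localDeviation A hp, if_neg hd]
  calc (nu A p : ℝ) / ((p - 1) * (p - nu A p))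
      = nu A p * ((p : ℝ) - 1)⁻¹ * ((p : ℝ) - nu A p)⁻¹ := by
        rw [div_mul_eq_div_div, div_eq_mul_inv, div_eq_mul_inv]
    _ ≤ #A * (2 / p) * ((#A + 1) / p) := by
        gcongr
        · exact inv_nonneg.2 (by linarith)
        · exact inv_nonneg.2 (by linarith)
        · exact inv_natCast_sub_one_le hp
    _ = 2 * #A * (#A + 1) / p ^ 2 := by ring

end Local

/-! ### Cancellation over complete periods -/

section Cancellation

variable {A : Finset ℕ} {t : Finset Nat.Primes}

theorem pairwise_coprime_primes (t : Finset Nat.Primes) :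
    (t : Set Nat.Primes).Pairwise (Function.onFun Nat.Coprime (↑)) := fun p _ q _ hpq ↦
  (Nat.coprime_primes p.2 q.2).2 (Subtype.coe_injective.ne hpq)

theorem abs_sum_range_prod_localDeviation_le (ht : t.Nonempty) (hν : ∀ p ∈ t, nu A p < p)
    (H : ℕ) :
    |∑ x ∈ range H, ∏ p ∈ t, localDeviation A p x| ≤ ∏ p ∈ t, (4 * #A / (p : ℝ)) := by
  have hper (p : Nat.Primes) (_ : p ∈ t) := periodic_localDeviation A p
  have hpos (p : Nat.Primes) (_ : p ∈ t) : 0 < (p : ℕ) := p.2.pos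
  have hzero : ∑ x ∈ range (∏ p ∈ t, (p : ℕ)), ∏ p ∈ t, localDeviation A p x = 0 := by
    obtain ⟨p, hp⟩ := ht
    rw [sum_range_prod_of_periodic hpos (pairwise_coprime_primes t) hper]
    exact prod_eq_zero hp (sum_localDeviation p.2.one_lt (hν p hp))
  calc |∑ x ∈ range H, ∏ p ∈ t, localDeviation A p x|
      ≤ ∑ x ∈ range (∏ p ∈ t, (p : ℕ)), |∏ p ∈ t, localDeviation A p x| :=
        abs_sum_range_le_of_periodic (prod_pos hpos) (periodic_prod_of_periodic hper) hzero H
    _ = ∏ p ∈ t, ∑ x ∈ range p, |localDeviation A p x| := by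
        simp only [abs_prod]
        exact sum_range_prod_of_periodic hpos (pairwise_coprime_primes t)
          fun p hp ↦ (hper p hp).comp abs
    _ ≤ ∏ p ∈ t, (4 * #A / (p : ℝ)) :=
        prod_le_prod (fun _ _ ↦ sum_nonneg fun _ _ ↦ abs_nonneg _)
          fun p hp ↦ sum_abs_localDeviation_le p.2.one_lt (hν p hp)

theorem abs_prod_localDeviation_le_of_mem {a : ℕ} (ha : a ∈ A) :
    |∏ p ∈ t, localDeviation A p a| ≤ ∏ p ∈ t, (4 * #A / (p : ℝ)) := by
  have hA : (1 : ℝ) ≤ #A := by exact_mod_cast card_pos.2 ⟨a, ha⟩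
  rw [abs_prod]
  refine prod_le_prod (fun p _ ↦ abs_nonneg _) fun p _ ↦ ?_
  refine (abs_localDeviation_le_of_mem p.2.one_lt (mem_image_of_mem _ ha)).trans ?_
  gcongr
  linarith

theorem abs_sum_sdiff_prod_localDeviation_le (ht : t.Nonempty) (hν : ∀ p ∈ t, nu A p < p)
    (H : ℕ) :
    |∑ x ∈ range H \ A, ∏ p ∈ t, localDeviation A p x| ≤
      (#A + 1) * ∏ p ∈ t, (4 * #A / (p : ℝ)) := by
  set B : ℝ := ∏ p ∈ t, (4 * #A / (p : ℝ))
  have hB : 0 ≤ B := prod_nonneg fun p _ ↦ by positivity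
  have hinter : |∑ x ∈ range H ∩ A, ∏ p ∈ t, localDeviation A p x| ≤ #A * B := by
    calc |∑ x ∈ range H ∩ A, ∏ p ∈ t, localDeviation A p x|
        ≤ ∑ x ∈ range H ∩ A, |∏ p ∈ t, localDeviation A p x| := abs_sum_le_sum_abs _ _
      _ ≤ #(range H ∩ A) • B := sum_le_card_nsmul _ _ _ fun x hx ↦
          abs_prod_localDeviation_le_of_mem (mem_inter.1 hx).2
      _ ≤ #A * B := by
          rw [nsmul_eq_mul]
          gcongr
          exact inter_subset_right
  calc |∑ x ∈ range H \ A, ∏ p ∈ t, localDeviation A p x|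
      = |∑ x ∈ range H, ∏ p ∈ t, localDeviation A p x
          - ∑ x ∈ range H ∩ A, ∏ p ∈ t, localDeviation A p x| := by
        rw [← sum_inter_add_sum_sdiff (range H) A, add_sub_cancel_left]
    _ ≤ B + #A * B :=
        (abs_sub _ _).trans (add_le_add (abs_sum_range_prod_localDeviation_le ht hν H) hinter)
    _ = (#A + 1) * B := by ring

end Cancellation

/-! ### Primes dividing a difference -/

theorem exists_pow_card_primeFactors_le {c ε : ℝ} (hc : 1 ≤ c) (hε : 0 < ε) :
    ∃ C : ℝ, 0 < C ∧ ∀ n : ℕ, n ≠ 0 → c ^ #n.primeFactors ≤ C * (n : ℝ) ^ ε := by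
  obtain ⟨M, hM⟩ := exists_nat_ge (c ^ (1 / ε))
  have hlarge (p : ℕ) (hp : M < p) : c ≤ (p : ℝ) ^ ε := by
    have hcp : c ^ (1 / ε) ≤ p := hM.trans (by exact_mod_cast hp.le)
    simpa [← Real.rpow_mul (zero_le_one.trans hc), hε.ne'] using
      Real.rpow_le_rpow (by positivity) hcp hε.le
  refine ⟨c ^ M, by positivity, fun n hn ↦ ?_⟩
  calc c ^ #n.primeFactors
      = ∏ _p ∈ n.primeFactors, c := (prod_const c).symm
    _ ≤ ∏ p ∈ n.primeFactors, (if p ≤ M then c else 1) * (p : ℝ) ^ ε := by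
        refine prod_le_prod (fun _ _ ↦ by positivity) fun p hp ↦ ?_
        split_ifs with hpM
        · have hp1 : (1 : ℝ) ≤ p := by exact_mod_cast (Nat.prime_of_mem_primeFactors hp).one_le
          exact le_mul_of_one_le_right (by positivity) (Real.one_le_rpow hp1 hε.le)
        · simpa using hlarge p (not_le.1 hpM)
    _ = c ^ #{p ∈ n.primeFactors | p ≤ M} * ((∏ p ∈ n.primeFactors, p : ℕ) : ℝ) ^ ε := by
        rw [prod_mul_distrib, ← prod_filter, prod_const, Nat.cast_prod,
          Real.finsetProd_rpow _ _ fun p _ ↦ p.cast_nonneg]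
    _ ≤ c ^ M * (n : ℝ) ^ ε := by
        have hsub : {p ∈ n.primeFactors | p ≤ M} ⊆ Icc 1 M := fun p hp ↦ by
          obtain ⟨hpn, hpM⟩ := mem_filter.1 hp
          exact mem_Icc.2 ⟨(Nat.prime_of_mem_primeFactors hpn).one_le, hpM⟩
        have hcard : #{p ∈ n.primeFactors | p ≤ M} ≤ M := by simpa using card_le_card hsub
        have hrad : ∏ p ∈ n.primeFactors, p ≤ n :=
          Nat.le_of_dvd (Nat.pos_of_ne_zero hn) (Nat.prod_primeFactors_dvd n)
        gcongr

theorem mod_mem_residues_iff_dvd (A : Finset ℕ) (d : ℕ) {p : ℕ} (hp : p.Prime) :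
    d % p ∈ residues A p ↔ p ∣ ∏ a ∈ A, ((d : ℤ) - a).natAbs := by
  simp only [mem_image, hp.prime.dvd_finsetProd_iff, ← Int.natCast_dvd, ← Nat.modEq_iff_dvd,
    Nat.ModEq]

theorem prod_natAbs_sub_ne_zero {A : Finset ℕ} {d : ℕ} (hd : d ∉ A) :
    ∏ a ∈ A, ((d : ℤ) - a).natAbs ≠ 0 :=
  prod_ne_zero_iff.2 fun a ha ↦ by
    have : d ≠ a := fun e ↦ hd (e ▸ ha)
    lia

theorem exists_three_pow_card_occupied_le (K : ℕ) {ε : ℝ} (hε : 0 < ε) :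
    ∃ C : ℝ, 0 < C ∧ ∀ (A : Finset ℕ) (P : Finset Nat.Primes) (d h : ℕ), #A = K → 1 ≤ h →
      (∀ a ∈ A, a ≤ h) → d ≤ h → d ∉ A →
      (3 : ℝ) ^ #(P.filter fun p : Nat.Primes ↦ d % p ∈ residues A p) ≤ C * (h : ℝ) ^ ε := by
  obtain ⟨C, hC, hpow⟩ :=
    exists_pow_card_primeFactors_le (c := 3) (ε := ε / (K + 1)) (by norm_num) (by positivity)
  refine ⟨C, hC, fun A P d h hK hh hA hd hdA ↦ ?_⟩
  set N := ∏ a ∈ A, ((d : ℤ) - a).natAbs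
  have hN0 : N ≠ 0 := prod_natAbs_sub_ne_zero hdA
  have hNh : N ≤ h ^ K := hK ▸ prod_le_pow_card _ _ _ fun a ha ↦ by
    have := hA a ha
    lia
  have hcard : #(P.filter fun p : Nat.Primes ↦ d % p ∈ residues A p) ≤ #N.primeFactors := by
    refine card_le_card_of_injOn (↑) (fun p hp ↦ ?_) Subtype.coe_injective.injOn
    exact Nat.mem_primeFactors.2
      ⟨p.2, (mod_mem_residues_iff_dvd A d p.2).1 (mem_filter.1 hp).2, hN0⟩
  calc (3 : ℝ) ^ #(P.filter fun p : Nat.Primes ↦ d % p ∈ residues A p)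
      ≤ 3 ^ #N.primeFactors := pow_le_pow_right₀ (by norm_num) hcard
    _ ≤ C * (N : ℝ) ^ (ε / (K + 1)) := hpow N hN0
    _ ≤ C * ((h : ℝ) ^ K) ^ (ε / (K + 1)) := by
        gcongr
        exact_mod_cast hNh
    _ = C * (h : ℝ) ^ (K * (ε / (K + 1))) := by
        rw [← Real.rpow_natCast_mul h.cast_nonneg]
    _ ≤ C * (h : ℝ) ^ ε := by
        gcongr
        · exact_mod_cast hh
        · rw [mul_div_left_comm]
          exact mul_le_of_le_one_right hε.le (div_le_one_of_le₀ (by linarith) (by positivity))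

theorem summable_primes_one_div_mul_sqrt :
    Summable fun p : Nat.Primes ↦ 1 / ((p : ℝ) * √p) := by
  refine (Nat.Primes.summable_rpow.2 (by norm_num : -(3 / 2 : ℝ) < -1)).congr fun p ↦ ?_
  have hp : (0 : ℝ) < p := by exact_mod_cast p.2.pos
  rw [Real.rpow_neg hp.le, one_div, show (3 / 2 : ℝ) = 1 + 1 / 2 by norm_num, Real.rpow_add hp,
    Real.rpow_one, Real.sqrt_eq_rpow]

theorem exists_prod_one_add_div_le {B : ℝ} (hB : 0 ≤ B) :
    ∃ C : ℝ, 0 < C ∧ ∀ P : Finset Nat.Primes, ∏ p ∈ P, (1 + B / ((p : ℝ) * √p)) ≤ C := by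
  refine ⟨Real.exp (∑' p : Nat.Primes, B / ((p : ℝ) * √p)), Real.exp_pos _, fun P ↦ ?_⟩
  have hsum : Summable fun p : Nat.Primes ↦ B / ((p : ℝ) * √p) := by
    simpa only [mul_one_div] using summable_primes_one_div_mul_sqrt.mul_left B
  refine (Real.prod_one_add_le_exp_sum P fun p ↦ by positivity).trans (Real.exp_le_exp.2 ?_)
  exact hsum.sum_le_tsum P fun p _ ↦ by positivity

theorem one_add_abs_localDeviation_mul_sqrt_le (A : Finset ℕ) {p : ℕ} (hp : 1 < p) (d : ℕ) :
    1 + |localDeviation A p d| * √p ≤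
      (1 + 2 * #A * (#A + 1) / (p * √p)) * if d % p ∈ residues A p then 3 else 1 := by
  have hsqrt : √(p : ℝ) / p = 1 / √p := Real.sqrt_div_self'
  split_ifs with hd
  · have hone : 1 / √(p : ℝ) ≤ 1 :=
      div_le_one_of_le₀ (Real.one_le_sqrt.2 (by exact_mod_cast hp.le)) (Real.sqrt_nonneg _)
    have hdev : |localDeviation A p d| * √p ≤ 2 :=
      calc |localDeviation A p d| * √p
          ≤ 2 / p * √p := by
            gcongr
            exact abs_localDeviation_le_of_mem hp hd
        _ = 2 * (1 / √p) := by rw [← hsqrt]; ring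
        _ ≤ 2 := by linarith
    have : 0 ≤ 2 * #A * (#A + 1) / (p * √(p : ℝ)) := by positivity
    linarith
  · rw [mul_one]
    gcongr
    calc |localDeviation A p d| * √p
        ≤ 2 * #A * (#A + 1) / p ^ 2 * √p := by
          gcongr
          exact abs_localDeviation_le_of_notMem hp hd
      _ = 2 * #A * (#A + 1) / p * (√p / p) := by ring
      _ = 2 * #A * (#A + 1) / (p * √p) := by rw [hsqrt, mul_one_div, div_div]

theorem exists_prod_one_add_abs_localDeviation_le (K : ℕ) {ε : ℝ} (hε : 0 < ε) :
    ∃ C : ℝ, 0 < C ∧ ∀ (A : Finset ℕ) (P : Finset Nat.Primes) (d h : ℕ), #A = K → 1 ≤ h →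
      (∀ a ∈ A, a ≤ h) → d ≤ h → d ∉ A →
      ∏ p ∈ P, (1 + |localDeviation A p d| * √(p : ℝ)) ≤ C * (h : ℝ) ^ ε := by
  obtain ⟨C₁, hC₁, hfree⟩ := exists_prod_one_add_div_le (B := 2 * K * (K + 1)) (by positivity)
  obtain ⟨C₂, hC₂, hocc⟩ := exists_three_pow_card_occupied_le K hε
  refine ⟨C₁ * C₂, by positivity, fun A P d h hK hh hA hd hdA ↦ ?_⟩
  calc ∏ p ∈ P, (1 + |localDeviation A p d| * √(p : ℝ))
      ≤ ∏ p ∈ P, ((1 + 2 * K * (K + 1) / ((p : ℝ) * √(p : ℝ))) *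
          if d % p ∈ residues A p then 3 else 1) :=
        prod_le_prod (fun p _ ↦ by positivity) fun p _ ↦
          hK ▸ one_add_abs_localDeviation_mul_sqrt_le A p.2.one_lt d
    _ = (∏ p ∈ P, (1 + 2 * K * (K + 1) / ((p : ℝ) * √(p : ℝ)))) *
          3 ^ #(P.filter fun p : Nat.Primes ↦ d % p ∈ residues A p) := by
        rw [prod_mul_distrib, ← prod_filter, prod_const]
    _ ≤ C₁ * (C₂ * (h : ℝ) ^ ε) := by
        gcongr
        exacts [hfree P, hocc A P d h hK hh hA hd hdA]
    _ = C₁ * C₂ * (h : ℝ) ^ ε := (mul_assoc _ _ _).symm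

/-! ### The finite products on average -/

theorem le_mul_add_div_of_le_of_le {x a b r : ℝ} (ha : 0 ≤ a) (hb : 0 ≤ b) (hr : 0 < r)
    (hxa : x ≤ a) (hxb : x ≤ b) : x ≤ r * a + b / r := by
  rcases le_total 1 r with h | h
  · exact hxa.trans <| (le_mul_of_one_le_left ha h).trans <|
      le_add_of_nonneg_right (div_nonneg hb hr.le)
  · exact hxb.trans <| (le_div_self hb hr h).trans <|
      le_add_of_nonneg_left (mul_nonneg hr.le ha)

/- Each nonempty `t` contributes at most the smaller of the assumed bound and the trivial one; the
weights `w` and the parameter `y` interpolate between the two so that both halves factor again. -/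
theorem abs_sum_prod_one_add_sub_card_le {α ι : Type*} (U : Finset α) (P : Finset ι)
    {f : ι → α → ℝ} {b w : ι → ℝ} {c y : ℝ} (hb : ∀ i, 0 ≤ b i) (hw : ∀ i ∈ P, 0 < w i)
    (hc : 0 ≤ c) (hy : 0 < y)
    (hf : ∀ t ⊆ P, t.Nonempty → |∑ x ∈ U, ∏ i ∈ t, f i x| ≤ c * ∏ i ∈ t, b i) :
    |∑ x ∈ U, ∏ i ∈ P, (1 + f i x) - #U| ≤
      y * c * ∏ i ∈ P, (1 + b i / w i) + (∑ x ∈ U, ∏ i ∈ P, (1 + |f i x| * w i)) / y := by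
  classical
  set E : Finset ι → ℝ := fun t ↦
    y * c * ∏ i ∈ t, b i / w i + (∑ x ∈ U, ∏ i ∈ t, |f i x| * w i) / y
  have hexpand : ∑ x ∈ U, ∏ i ∈ P, (1 + f i x) - #U =
      ∑ t ∈ P.powerset.erase ∅, ∑ x ∈ U, ∏ i ∈ t, f i x := by
    simp only [prod_one_add]
    rw [sum_comm, ← add_sum_erase _ _ (empty_mem_powerset P)]
    simp
  have hE (t : Finset ι) (ht : t ⊆ P) : 0 ≤ E t := by
    have hwt (i : ι) (hi : i ∈ t) : 0 ≤ w i := (hw i (ht hi)).le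
    exact add_nonneg
      (mul_nonneg (by positivity) (prod_nonneg fun i hi ↦ div_nonneg (hb i) (hwt i hi)))
      (div_nonneg (sum_nonneg fun x _ ↦ prod_nonneg fun i hi ↦
        mul_nonneg (abs_nonneg _) (hwt i hi)) hy.le)
  have hterm (t : Finset ι) (ht : t ⊆ P) (hne : t.Nonempty) :
      |∑ x ∈ U, ∏ i ∈ t, f i x| ≤ E t := by
    have htriv : |∑ x ∈ U, ∏ i ∈ t, f i x| ≤ ∑ x ∈ U, ∏ i ∈ t, |f i x| := by
      simpa only [abs_prod] using abs_sum_le_sum_abs (fun x ↦ ∏ i ∈ t, f i x) U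
    have hW : 0 < ∏ i ∈ t, w i := prod_pos fun i hi ↦ hw i (ht hi)
    refine (le_mul_add_div_of_le_of_le (mul_nonneg hc (prod_nonneg fun i _ ↦ hb i))
      (sum_nonneg fun x _ ↦ prod_nonneg fun i _ ↦ abs_nonneg _) (div_pos hy hW)
      (hf t ht hne) htriv).trans_eq ?_
    simp only [E, prod_div_distrib, prod_mul_distrib, ← sum_mul]
    field_simp
  calc |∑ x ∈ U, ∏ i ∈ P, (1 + f i x) - #U|
      ≤ ∑ t ∈ P.powerset.erase ∅, |∑ x ∈ U, ∏ i ∈ t, f i x| :=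
        hexpand ▸ abs_sum_le_sum_abs _ _
    _ ≤ ∑ t ∈ P.powerset.erase ∅, E t := sum_le_sum fun t ht ↦
        hterm t (mem_powerset.1 (mem_of_mem_erase ht))
          (nonempty_iff_ne_empty.2 (ne_of_mem_erase ht))
    _ ≤ ∑ t ∈ P.powerset, E t :=
        sum_le_sum_of_subset_of_nonneg (erase_subset _ _) fun t ht _ ↦ hE t (mem_powerset.1 ht)
    _ = _ := by
        simp only [E, prod_one_add]
        rw [sum_add_distrib, ← mul_sum, ← sum_div, sum_comm]

theorem abs_card_range_sdiff_sub_le (H : ℕ) (A : Finset ℕ) : |(#(range H \ A) : ℝ) - H| ≤ #A := by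
  have hle : #(range H \ A) ≤ H := by
    simpa using card_le_card (sdiff_subset (s := range H) (t := A))
  have hge : H ≤ #(range H \ A) + #A := by simpa using le_card_sdiff A (range H)
  rw [abs_sub_comm, abs_of_nonneg (by simpa using hle), sub_le_iff_le_add']
  exact_mod_cast hge

theorem exists_abs_sum_prod_one_add_localDeviation_sub_le (K : ℕ) {ε : ℝ} (hε : 0 < ε) :
    ∃ C : ℝ, 0 < C ∧ ∀ (A : Finset ℕ) (P : Finset Nat.Primes) (h H : ℕ), #A = K → 1 ≤ H →
      H ≤ h → (∀ a ∈ A, a ≤ h) → (∀ p : Nat.Primes, nu A p < p) →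
      |∑ d ∈ range H \ A, ∏ p ∈ P, (1 + localDeviation A p d) - H| ≤ C * (h : ℝ) ^ ε * √H := by
  obtain ⟨C₁, hC₁, hcancel⟩ := exists_prod_one_add_div_le (B := 4 * K) (by positivity)
  obtain ⟨C₂, hC₂, htriv⟩ := exists_prod_one_add_abs_localDeviation_le K hε
  refine ⟨(K + 1) * C₁ + C₂ + K, by positivity, fun A P h H hK hH hHh hA hν ↦ ?_⟩
  have hsqrt : 1 ≤ √(H : ℝ) := Real.one_le_sqrt.2 (by exact_mod_cast hH)
  have hpow : 1 ≤ (h : ℝ) ^ ε := Real.one_le_rpow (by exact_mod_cast hH.trans hHh) hε.le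
  have hcard := abs_card_range_sdiff_sub_le H A
  have hmain := abs_sum_prod_one_add_sub_card_le (range H \ A) P
    (f := fun p d ↦ localDeviation A p d) (b := fun p ↦ 4 * #A / (p : ℝ)) (w := fun p ↦ √(p : ℝ))
    (c := #A + 1) (y := √H) (fun p ↦ by positivity)
    (fun p _ ↦ Real.sqrt_pos.2 (by exact_mod_cast p.2.pos)) (by positivity) (by positivity)
    fun t _ ht ↦ abs_sum_sdiff_prod_localDeviation_le ht (fun p _ ↦ hν p) H
  simp only [hK, div_div] at hcard hmain
  have htriv_sum : ∑ d ∈ range H \ A, ∏ p ∈ P, (1 + |localDeviation A p d| * √(p : ℝ)) ≤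
      H * (C₂ * (h : ℝ) ^ ε) := by
    refine (sum_le_card_nsmul _ _ (C₂ * (h : ℝ) ^ ε) fun d hd ↦ ?_).trans ?_
    · obtain ⟨hdH, hdA⟩ := mem_sdiff.1 hd
      exact htriv A P d h hK (hH.trans hHh) hA ((mem_range.1 hdH).le.trans hHh) hdA
    · rw [nsmul_eq_mul]
      gcongr
      simpa using card_le_card (sdiff_subset (s := range H) (t := A))
  calc |∑ d ∈ range H \ A, ∏ p ∈ P, (1 + localDeviation A p d) - H|
      ≤ |∑ d ∈ range H \ A, ∏ p ∈ P, (1 + localDeviation A p d) - #(range H \ A)| +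
          |(#(range H \ A) : ℝ) - H| := abs_sub_le _ _ _
    _ ≤ √H * (K + 1) * C₁ + H * (C₂ * (h : ℝ) ^ ε) / √H + K := by
        refine add_le_add (hmain.trans ?_) hcard
        gcongr
        exact hcancel P
    _ = (K + 1) * C₁ * (1 * √H) + C₂ * (h : ℝ) ^ ε * √H + K * (1 * 1) := by
        rw [mul_div_right_comm, Real.div_sqrt]
        ring
    _ ≤ (K + 1) * C₁ * ((h : ℝ) ^ ε * √H) + C₂ * (h : ℝ) ^ ε * √H + K * ((h : ℝ) ^ ε * √H) := by
        gcongr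
    _ = ((K + 1) * C₁ + C₂ + K) * (h : ℝ) ^ ε * √H := by ring

/-! ### The singular series -/

section SingSeries

variable {A : Finset ℕ} {d : ℕ}

theorem singSeries_nonneg (A : Finset ℕ) : 0 ≤ singSeries A :=
  tprod_nonneg fun p ↦ localFactor_nonneg A p.2.pos

theorem summable_localDeviation (hd : d ∉ A) :
    Summable fun p : Nat.Primes ↦ localDeviation A p d := by
  set N := ∏ a ∈ A, ((d : ℤ) - a).natAbs
  have hsum : Summable fun p : Nat.Primes ↦ 2 * #A * (#A + 1) / ((p : ℕ) : ℝ) ^ 2 := by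
    simpa [div_eq_mul_inv, Real.rpow_neg] using
      (Nat.Primes.summable_rpow.2 (by norm_num : (-2 : ℝ) < -1)).mul_left (2 * #A * (#A + 1) : ℝ)
  have hfin : {p : Nat.Primes | (p : ℕ) ≤ N}.Finite :=
    (Set.finite_Iic N).preimage Subtype.coe_injective.injOn
  refine hsum.of_norm_bounded_eventually ?_
  filter_upwards [hfin.compl_mem_cofinite] with p hp
  refine abs_localDeviation_le_of_notMem p.2.one_lt fun hdp ↦ hp ?_
  exact Nat.le_of_dvd (Nat.pos_of_ne_zero (prod_natAbs_sub_ne_zero hd))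
    ((mod_mem_residues_iff_dvd A d p.2).1 hdp)

theorem multipliable_one_add_localDeviation (hd : d ∉ A) :
    Multipliable fun p : Nat.Primes ↦ 1 + localDeviation A p d :=
  Real.multipliable_one_add_of_summable (summable_localDeviation hd)

theorem multipliable_localFactor (A : Finset ℕ) :
    Multipliable fun p : Nat.Primes ↦ localFactor A p := by
  induction A using Finset.induction_on with
  | empty => simp [localFactor, nu]
  | insert d A hd ih =>
    exact (ih.mul (multipliable_one_add_localDeviation hd)).congr
      fun p ↦ (localFactor_insert p.2.one_lt hd).symm

theorem singSeries_insert (hd : d ∉ A) :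
    singSeries (insert d A) = singSeries A * ∏' p : Nat.Primes, (1 + localDeviation A p d) :=
  (tprod_congr fun p ↦ localFactor_insert p.2.one_lt hd).trans
    ((multipliable_localFactor A).tprod_mul (multipliable_one_add_localDeviation hd))

theorem nu_lt_of_singSeries_ne_zero (hA : singSeries A ≠ 0) (p : Nat.Primes) : nu A p < p := by
  refine (nu_le A p.2.pos).lt_of_ne fun hν ↦ hA ?_
  exact tprod_of_exists_eq_zero ⟨p, localFactor_eq_zero p.2.pos hν⟩

theorem exists_abs_sum_singSeries_insert_sub_le (K : ℕ) {ε : ℝ} (hε : 0 < ε) :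
    ∃ C : ℝ, 0 < C ∧ ∀ (A : Finset ℕ) (h H : ℕ), #A = K → 1 ≤ H → H ≤ h → (∀ a ∈ A, a ≤ h) →
      |∑ d ∈ range H \ A, singSeries (insert d A) - singSeries A * H| ≤
        singSeries A * H * (C * ((h : ℝ) ^ ε / √H)) := by
  obtain ⟨C, hC, hfinite⟩ := exists_abs_sum_prod_one_add_localDeviation_sub_le K hε
  refine ⟨C, hC, fun A h H hK hH hHh hA ↦ ?_⟩
  have hfactor : ∑ d ∈ range H \ A, singSeries (insert d A) =
      singSeries A * ∑ d ∈ range H \ A, ∏' p : Nat.Primes, (1 + localDeviation A p d) := by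
    rw [mul_sum]
    exact sum_congr rfl fun d hd ↦ singSeries_insert (mem_sdiff.1 hd).2
  rw [hfactor, ← mul_sub, abs_mul, abs_of_nonneg (singSeries_nonneg A), mul_assoc]
  obtain hS | hS := eq_or_ne (singSeries A) 0
  · simp [hS]
  refine mul_le_mul_of_nonneg_left ?_ (singSeries_nonneg A)
  have hlim := ((tendsto_finsetSum (range H \ A) fun d hd ↦
    (multipliable_one_add_localDeviation (mem_sdiff.1 hd).2).hasProd).sub_const (H : ℝ)).abs
  calc |∑ d ∈ range H \ A, ∏' p : Nat.Primes, (1 + localDeviation A p d) - H|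
      ≤ C * (h : ℝ) ^ ε * √H := le_of_tendsto' hlim fun P ↦
        hfinite A P h H hK hH hHh hA (nu_lt_of_singSeries_ne_zero hS)
    _ = C * (h : ℝ) ^ ε * (H / √H) := by rw [Real.div_sqrt]
    _ = H * (C * ((h : ℝ) ^ ε / √H)) := by ring

end SingSeries

/-! ### Iterating over the variables -/

theorem nsmul_sum_powersetCard_succ {α M : Type*} [DecidableEq α] [AddCommMonoid M]
    (U : Finset α) (j : ℕ) (F : Finset α → M) :
    (j + 1) • ∑ s ∈ U.powersetCard (j + 1), F s =
      ∑ s ∈ U.powersetCard j, ∑ d ∈ U \ s, F (insert d s) := by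
  calc (j + 1) • ∑ s ∈ U.powersetCard (j + 1), F s
      = ∑ s ∈ U.powersetCard (j + 1), ∑ _d ∈ s, F s := by
        rw [smul_sum]
        exact sum_congr rfl fun s hs ↦ by rw [sum_const, (mem_powersetCard.1 hs).2]
    _ = ∑ s ∈ U.powersetCard j, ∑ d ∈ U \ s, F (insert d s) := by
        rw [sum_sigma', sum_sigma']
        refine sum_bij' (fun x _ ↦ ⟨x.1.erase x.2, x.2⟩) (fun x _ ↦ ⟨insert x.2 x.1, x.2⟩)
          ?_ ?_ ?_ ?_ ?_ <;> rintro ⟨s, d⟩ hx <;>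
          simp only [mem_sigma, mem_powersetCard, mem_sdiff] at hx ⊢
        · obtain ⟨⟨hsU, hs⟩, hd⟩ := hx
          exact ⟨⟨(erase_subset _ _).trans hsU, by simp [card_erase_of_mem hd, hs]⟩, hsU hd,
            notMem_erase _ _⟩
        · obtain ⟨⟨hsU, hs⟩, hdU, hd⟩ := hx
          exact ⟨⟨insert_subset hdU hsU, by rw [card_insert_of_notMem hd, hs]⟩,
            mem_insert_self _ _⟩
        · rw [insert_erase hx.2]
        · rw [erase_insert hx.2.2]
        · rw [insert_erase hx.2]

theorem abs_sub_mul_div_le_of_abs_sub_le {S T M y n u v : ℝ} (hy : 0 ≤ y) (hn : 0 < n) (hv : 0 ≤ v)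
    (hT : |T - M| ≤ M * u) (hS : |n * S - T * y| ≤ T * y * v) :
    |S - M * y / n| ≤ M * y / n * (u + v + u * v) := by
  have hTM : T ≤ M * (1 + u) := by linarith [(abs_le.1 hT).2]
  have hbound : |n * S - M * y| ≤ M * y * (u + v + u * v) :=
    calc |n * S - M * y| ≤ |n * S - T * y| + |T * y - M * y| := abs_sub_le _ _ _
      _ = |n * S - T * y| + |T - M| * y := by rw [← sub_mul, abs_mul, abs_of_nonneg hy]
      _ ≤ T * y * v + M * u * y := by gcongr
      _ ≤ M * (1 + u) * y * v + M * u * y := by gcongr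
      _ = M * y * (u + v + u * v) := by ring
  calc |S - M * y / n| = |n * S - M * y| / n := by
        rw [← abs_of_pos hn, ← abs_div, abs_of_pos hn, sub_div, mul_div_cancel_left₀ _ hn.ne']
    _ ≤ M * y * (u + v + u * v) / n := by gcongr
    _ = M * y / n * (u + v + u * v) := by ring

theorem rpow_half_div_sqrt_le {ε : ℝ} (hε : 0 < ε) {h H : ℕ} (hH : 1 ≤ H) (hHh : H ≤ h) :
    (h : ℝ) ^ (ε / 2) / √H ≤ (h : ℝ) ^ ε / √H ∧
      ((h : ℝ) ^ (ε / 2) / √H) ^ 2 ≤ (h : ℝ) ^ ε / √H := by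
  have hh : (1 : ℝ) ≤ h := by exact_mod_cast hH.trans hHh
  have hsqrt : 1 ≤ √(H : ℝ) := Real.one_le_sqrt.2 (by exact_mod_cast hH)
  refine ⟨by gcongr; linarith, ?_⟩
  rw [div_pow, ← Real.rpow_mul_natCast h.cast_nonneg, Nat.cast_two, div_mul_cancel₀ _ two_ne_zero]
  gcongr
  exact le_self_pow₀ hsqrt two_ne_zero

theorem succ_mul_singSeriesSum_succ (A : Finset ℕ) (H j : ℕ) :
    (j + 1) * singSeriesSum A H (j + 1) =
      ∑ s ∈ (range H \ A).powersetCard j,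
        ∑ d ∈ range H \ (A ∪ s), singSeries (insert d (A ∪ s)) := by
  simpa only [singSeriesSum, nsmul_eq_mul, Nat.cast_add_one, union_insert, sdiff_sdiff_left,
    sup_eq_union] using
    nsmul_sum_powersetCard_succ (range H \ A) j fun s ↦ singSeries (A ∪ s)

theorem exists_abs_succ_mul_singSeriesSum_succ_sub_le (K j : ℕ) {ε : ℝ} (hε : 0 < ε) :
    ∃ C : ℝ, 0 < C ∧ ∀ (A : Finset ℕ) (h H : ℕ), #A = K → 1 ≤ H → H ≤ h → (∀ a ∈ A, a ≤ h) →
      |(j + 1) * singSeriesSum A H (j + 1) - singSeriesSum A H j * H| ≤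
        singSeriesSum A H j * H * (C * ((h : ℝ) ^ ε / √H)) := by
  obtain ⟨C, hC, hinsert⟩ := exists_abs_sum_singSeries_insert_sub_le (K + j) hε
  refine ⟨C, hC, fun A h H hK hH hHh hA ↦ ?_⟩
  rw [succ_mul_singSeriesSum_succ, singSeriesSum, sum_mul, ← sum_sub_distrib, sum_mul]
  refine (abs_sum_le_sum_abs _ _).trans (sum_le_sum fun s hs ↦ ?_)
  obtain ⟨hsub, hcard⟩ := mem_powersetCard.1 hs
  refine hinsert (A ∪ s) h H ?_ hH hHh fun a ha ↦ ?_
  · rw [card_union_of_disjoint (disjoint_sdiff.mono_right hsub), hK, hcard]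
  · exact (mem_union.1 ha).elim (hA a) fun has ↦
      (mem_range.1 (mem_sdiff.1 (hsub has)).1).le.trans hHh

theorem stmt13_general (K j : ℕ) {ε : ℝ} (hε : 0 < ε) :
    ∃ C : ℝ, 0 < C ∧ ∀ (A : Finset ℕ) (h H : ℕ), #A = K → 1 ≤ H → H ≤ h → (∀ a ∈ A, a ≤ h) →
      |singSeriesSum A H j - singSeries A * (H : ℝ) ^ j / j.factorial| ≤
        C * |singSeries A| * (H : ℝ) ^ j / j.factorial * (h : ℝ) ^ ε / √H := by
  induction j generalizing ε with
  | zero =>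
    refine ⟨1, one_pos, fun A h H _ _ _ _ ↦ ?_⟩
    simp only [singSeriesSum, powersetCard_zero, sum_singleton, union_empty, pow_zero,
      Nat.factorial_zero, Nat.cast_one, mul_one, div_one, sub_self, abs_zero]
    positivity
  | succ j ih =>
    obtain ⟨C₁, hC₁, hj⟩ := ih (half_pos hε)
    obtain ⟨C₂, hC₂, hstep⟩ := exists_abs_succ_mul_singSeriesSum_succ_sub_le K j (half_pos hε)
    refine ⟨C₁ + C₂ + C₁ * C₂, by positivity, fun A h H hK hH hHh hA ↦ ?_⟩
    specialize hj A h H hK hH hHh hA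
    specialize hstep A h H hK hH hHh hA
    have hS : 0 ≤ singSeries A := singSeries_nonneg A
    rw [abs_of_nonneg hS] at hj ⊢
    set δ : ℝ := (h : ℝ) ^ (ε / 2) / √H with hδ
    have herror : C₁ * δ + C₂ * δ + C₁ * δ * (C₂ * δ) ≤
        (C₁ + C₂ + C₁ * C₂) * ((h : ℝ) ^ ε / √H) := by
      obtain ⟨hle, hsq⟩ := rpow_half_div_sqrt_le hε hH hHh
      linear_combination C₁ * hle + C₂ * hle + C₁ * C₂ * hsq
    have hmain : singSeries A * (H : ℝ) ^ j / j.factorial * H / (j + 1) =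
        singSeries A * (H : ℝ) ^ (j + 1) / (j + 1).factorial := by
      rw [Nat.factorial_succ, pow_succ]
      push_cast
      field_simp
    calc |singSeriesSum A H (j + 1) - singSeries A * (H : ℝ) ^ (j + 1) / (j + 1).factorial|
        ≤ singSeries A * (H : ℝ) ^ (j + 1) / (j + 1).factorial *
            (C₁ * δ + C₂ * δ + C₁ * δ * (C₂ * δ)) :=
          hmain ▸ abs_sub_mul_div_le_of_abs_sub_le H.cast_nonneg (by positivity) (by positivity)
            (hj.trans_eq (by rw [hδ]; ring)) hstep
      _ ≤ singSeries A * (H : ℝ) ^ (j + 1) / (j + 1).factorial *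
            ((C₁ + C₂ + C₁ * C₂) * ((h : ℝ) ^ ε / √H)) := by gcongr
      _ = _ := by ring

/-- `∑_{1≤d_1<⋯<d_{k-2}<H} S({0,d_1,…,d_{k-2},D})
 = S({0,D}) H^{k-2}/(k-2)! (1 + O_k(D^ε/H^{1/2}))`. -/
theorem stmt13 (k : ℕ) (hk : 3 ≤ k) (ε : ℝ) (hε : 0 < ε) :
    ∃ C : ℝ, 0 < C ∧ ∀ (D H : ℕ), 1 ≤ H → H ≤ D →
      |(∑ s ∈ (Finset.Ioo 0 H).powersetCard (k - 2),
            singSeries (insert 0 (insert D s))) -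
          singSeries {0, D} * (H : ℝ) ^ (k - 2) / (Nat.factorial (k - 2) : ℝ)| ≤
        C * |singSeries {0, D}| * (H : ℝ) ^ (k - 2) / (Nat.factorial (k - 2) : ℝ) *
          (D : ℝ) ^ ε / Real.sqrt H := by
  obtain ⟨C, hC, hbound⟩ := stmt13_general 2 (k - 2) hε
  refine ⟨C, hC, fun D H hH hHD ↦ ?_⟩
  have hIoo : Ioo 0 H = range H \ {0, D} := by grind
  simpa only [singSeriesSum, hIoo, insert_union, singleton_union] using
    hbound {0, D} D H (card_pair (by lia)) hH hHD (by simp)
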